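/- Let G be a finite connected simple graph. If G has at least three cycles of length 3 and has no cycle of length 4, then deg(P_G) ≥ 3. -/

import Mathlib

open MvPolynomial Pointwise

/-- `ρ({i,j}) = e_i + e_j` : the 0/1 (incidence) vector of an edge. -/
noncomputable def rho {N : ℕ} (e : Sym2 (Fin N)) : Fin N → ℝ :=
  fun v => if v ∈ e then 1 else 0

/-- The edge polytope of a graph on `Fin N`. -/
noncomputable def edgePolytope {N : ℕ} (G : SimpleGraph (Fin N)) : Set (Fin N → ℝ) :=
  convexHull ℝ (rho '' G.edgeSet)

/-- Number of lattice points of the `t`-th dilation (`= 1` for `t = 0`). -/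
noncomputable def ehr {N : ℕ} (P : Set (Fin N → ℝ)) (t : ℕ) : ℕ :=
  if t = 0 then 1 else Nat.card {x : Fin N → ℤ // (fun i => (x i : ℝ)) ∈ (t : ℝ) • P}

/-- The dimension of a polytope: the rank of the direction of its affine span. -/
noncomputable def polyDim {N : ℕ} (P : Set (Fin N → ℝ)) : ℕ :=
  Module.finrank ℝ (affineSpan ℝ P).direction

/-- The `i`-th coefficient of `(1-λ)^{d+1} (1 + Σ_{t≥1} |tP ∩ Z^N| λ^t)`. -/
noncomputable def deltaCoeff {N : ℕ} (P : Set (Fin N → ℝ)) (i : ℕ) : ℤ :=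
  ∑ j ∈ Finset.range (i + 1),
    (-1 : ℤ) ^ j * (Nat.choose (polyDim P + 1) j : ℤ) * (ehr P (i - j) : ℤ)

/-- The degree of the δ-polynomial of `P`. -/
noncomputable def polyDeg {N : ℕ} (P : Set (Fin N → ℝ)) : ℕ :=
  sSup {i : ℕ | deltaCoeff P i ≠ 0}

/-- The monomial `t_i t_j s` attached to an edge `{i,j}`; `s` is the variable `none`. -/
noncomputable def edgeMonom (K : Type*) [Field K] {V : Type*} (e : Sym2 V) :
    MvPolynomial (Option V) K :=
  Sym2.lift ⟨fun i j => X (some i) * X (some j) * X none, fun i j => by ring⟩ e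

/-- The edge ring `K[G]`, the subalgebra generated by the monomials `t^{ρ(e)} s`. -/
noncomputable def edgeRing (K : Type*) [Field K] {V : Type*} (G : SimpleGraph V) :
    Subalgebra K (MvPolynomial (Option V) K) :=
  Algebra.adjoin K (edgeMonom K '' G.edgeSet)

/-- The toric ideal `I_G`: kernel of `x_e ↦ t^{ρ(e)} s`. -/
noncomputable def toricIdeal (K : Type*) [Field K] {V : Type*} (G : SimpleGraph V) :
    Ideal (MvPolynomial G.edgeSet K) :=
  RingHom.ker (MvPolynomial.aeval (fun e : G.edgeSet => edgeMonom K (e : Sym2 V)) :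
    MvPolynomial G.edgeSet K →ₐ[K] MvPolynomial (Option V) K)

/-- `S/I` has a `q`-linear (minimal graded free) resolution: there is a graded free
resolution of `S/I` in which the free module at homological step `i ≥ 1` is generated
in the single degree `q + i - 1`; equivalently all Betti numbers `β_{i,j}` with
`j ≠ q + i - 1` vanish. -/
def HasLinearResolution {σ K : Type*} [Field K] (q : ℕ)
    (I : Ideal (MvPolynomial σ K)) : Prop :=
  ∃ (b : ℕ → ℕ)
    (φ₀ : (Fin (b 0) →₀ MvPolynomial σ K) →ₗ[MvPolynomial σ K] MvPolynomial σ K)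
    (φ : ∀ i : ℕ,
      (Fin (b (i + 1)) →₀ MvPolynomial σ K) →ₗ[MvPolynomial σ K]
        (Fin (b i) →₀ MvPolynomial σ K)),
    LinearMap.range φ₀ = I ∧
    LinearMap.ker φ₀ = LinearMap.range (φ 0) ∧
    (∀ i, LinearMap.ker (φ i) = LinearMap.range (φ (i + 1))) ∧
    (∀ j, (φ₀ (Finsupp.single j 1)).IsHomogeneous q) ∧
    (∀ i j k, ((φ i (Finsupp.single j 1)) k).IsHomogeneous 1)

/-!
Lift the generators of the cone over a lattice polytope `P` of dimension `d` to generic heights.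
The lower facets of the lifted cone give a triangulation, and a generic direction `q` in the cone
decides which walls belong to which cell, so that the cone is a disjoint union of half-open
simplicial cones. Each of these is tiled by the translates of a half-open parallelepiped, hence
`(1 - λ) ^ (d + 1)` times the Ehrhart series of `P` is the sum of the generating functions of the
lattice points of the parallelepipeds. In particular `deg P` is at least the height of every
lattice point of every parallelepiped.

For the edge polytope of a graph with two disjoint triangles, half the sum of their six edge
vectors is such a point of height `3`. If no two of the three triangles are disjoint, the absence
of `4`-cycles forces them to share exactly one vertex, and then three suitable edges add up to such
a point, provided that `q` is chosen close to the sum of two other edges.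
-/

section Asymptotics

open Filter

variable {𝕜 : Type*} [Field 𝕜] [LinearOrder 𝕜] [IsStrictOrderedRing 𝕜]

theorem eventually_pos_mul_add_iff (a c : 𝕜) :
    ∀ᶠ M in atTop, 0 < M * a + c ↔ 0 < a ∨ a = 0 ∧ 0 < c := by
  rcases lt_trichotomy a 0 with ha | rfl | ha
  · filter_upwards [eventually_ge_atTop (-c / a)] with M hM
    have : M * a ≤ -c := (div_le_iff_of_neg ha).1 hM
    grind
  · simp
  · filter_upwards [eventually_gt_atTop (-c / a)] with M hM
    have : -c < M * a := (div_lt_iff₀ ha).1 hM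
    grind

theorem eventually_mul_add_ne_zero {a c : 𝕜} (h : a ≠ 0 ∨ c ≠ 0) :
    ∀ᶠ M in atTop, M * a + c ≠ 0 := by
  filter_upwards [eventually_pos_mul_add_iff a c, eventually_pos_mul_add_iff (-a) (-c)]
    with M hpos hneg
  grind

end Asymptotics

section Triangulation

open Filter Module

variable {𝕜 V ι κ : Type*} [Field 𝕜] [AddCommGroup V] [Module 𝕜 V] {v : ι → V} {w : ι → 𝕜}

theorem eq_top_of_coord_ne_zero (b : Basis κ 𝕜 V) {W : Submodule 𝕜 V} {e : κ} {x : V}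
    (hb : ∀ i, i ≠ e → b i ∈ W) (hx : x ∈ W) (he : b.coord e x ≠ 0) : W = ⊤ := by
  by_contra hW
  obtain ⟨f, hf, hfW⟩ := W.exists_le_ker_of_lt_top (lt_top_iff_ne_top.2 hW)
  have hcoord : f = f (b e) • b.coord e := b.ext fun i => by
    rcases eq_or_ne i e with rfl | hi
    · simp
    · simpa [hi] using hfW (hb i hi)
  have hfx : f (b e) * b.coord e x = 0 :=
    (DFunLike.congr_fun hcoord x).symm.trans (hfW hx)
  exact hf (by rw [hcoord, (mul_eq_zero_iff_right he).1 hfx, zero_smul])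

/-- The indices whose lifts `(v i, w i)` lie on the graph of the functional `l`. -/
def tightSet (v : ι → V) (w : ι → 𝕜) (l : Dual 𝕜 V) : Set ι :=
  {i | l (v i) = w i}

theorem mem_tightSet {l : Dual 𝕜 V} {i : ι} : i ∈ tightSet v w l ↔ l (v i) = w i := Iff.rfl

/-- A lifting height `w` on a vector configuration `v` is generic if the vectors lifted onto a
common graph are always linearly independent; the regular subdivision induced by `w` is then a
triangulation. -/
def IsGenericWeight (v : ι → V) (w : ι → 𝕜) : Prop :=
  ∀ l : Dual 𝕜 V, LinearIndepOn 𝕜 v (tightSet v w l)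

theorem exists_relation_of_not_linearIndepOn {J : Set ι} (hJ : ¬LinearIndepOn 𝕜 v J) :
    ∃ r ∈ Finsupp.supported 𝕜 𝕜 J, Finsupp.linearCombination 𝕜 v r = 0 ∧ r ≠ 0 := by
  rw [linearIndepOn_iff] at hJ
  push Not at hJ
  exact hJ

theorem isGenericWeight_of_relations
    (h : ∀ J : Set ι, ¬LinearIndepOn 𝕜 v J → ∃ r ∈ Finsupp.supported 𝕜 𝕜 J,
      Finsupp.linearCombination 𝕜 v r = 0 ∧ Finsupp.linearCombination 𝕜 w r ≠ 0) :
    IsGenericWeight v w := by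
  intro l
  by_contra hl
  obtain ⟨r, hr, hv, hw⟩ := h _ hl
  refine hw ?_
  calc Finsupp.linearCombination 𝕜 w r = Finsupp.linearCombination 𝕜 (l ∘ v) r :=
        Finsupp.sum_congr fun i hi => congrArg (r i * ·) (mem_tightSet.1 (hr hi)).symm
    _ = l (Finsupp.linearCombination 𝕜 v r) := (Finsupp.apply_linearCombination ..).symm
    _ = 0 := by rw [hv, map_zero]

variable [LinearOrder 𝕜]

/-- A maximal cell of the regular triangulation of the cone over `v` induced by the lifting
heights `w`, encoded by the functional whose graph supports the corresponding lower facet of the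
lifted cone. -/
@[ext]
structure Cell (v : ι → V) (w : ι → 𝕜) where
  toDual : Dual 𝕜 V
  le : ∀ i, toDual (v i) ≤ w i
  linearIndepOn : LinearIndepOn 𝕜 v (tightSet v w toDual)
  span_eq_top : Submodule.span 𝕜 (v '' tightSet v w toDual) = ⊤

namespace Cell

/-- The indices of the rays of a cell. -/
abbrev support (c : Cell v w) : Set ι := tightSet v w c.toDual

/-- The vectors spanning the rays of a cell, as a basis. -/
noncomputable def basis (c : Cell v w) : Basis c.support 𝕜 V :=
  .mk c.linearIndepOn (by rw [← Set.image_eq_range, c.span_eq_top])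

theorem basis_apply (c : Cell v w) (i : c.support) : c.basis i = v i :=
  Basis.mk_apply ..

theorem toDual_apply (c : Cell v w) (i : c.support) : c.toDual (v i) = w i :=
  mem_tightSet.1 i.2

theorem support_injective : Function.Injective (support : Cell v w → Set ι) := fun c c' h =>
  Cell.ext <| c.basis.ext fun i => by
    rw [basis_apply, toDual_apply]
    exact (h ▸ i.2 : (i : ι) ∈ c'.support).symm

instance [Finite ι] : Finite (Cell v w) :=
  .of_injective _ support_injective

theorem toDual_sub_toDual (c c' : Cell v w) (y : V) : c.toDual y - c'.toDual y =
    (c.basis.repr y).sum fun i a => a * (w i - c'.toDual (v i)) := by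
  conv_lhs => rw [← c.basis.linearCombination_repr y, ← LinearMap.sub_apply,
    Finsupp.linearCombination_apply, map_finsuppSum]
  simp only [map_smul, LinearMap.sub_apply, basis_apply, toDual_apply, smul_eq_mul]

variable [IsStrictOrderedRing 𝕜]

theorem toDual_le_toDual {c c' : Cell v w} {y : V} (hy : ∀ i, 0 ≤ c.basis.repr y i) :
    c'.toDual y ≤ c.toDual y := by
  rw [← sub_nonneg, toDual_sub_toDual]
  exact Finset.sum_nonneg fun i _ => mul_nonneg (hy i) (sub_nonneg.2 (c'.le i))

theorem eq_of_repr_pos {c c' : Cell v w} {y : V} (hy : ∀ i, 0 < c.basis.repr y i)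
    (hy' : ∀ i, 0 < c'.basis.repr y i) : c = c' := by
  have hsum : (c.basis.repr y).sum (fun i a => a * (w i - c'.toDual (v i))) = 0 := by
    rw [← toDual_sub_toDual, sub_eq_zero]
    exact (toDual_le_toDual fun i => (hy' i).le).antisymm (toDual_le_toDual fun i => (hy i).le)
  rw [Finsupp.sum, Finset.sum_eq_zero_iff_of_nonneg fun i _ =>
    mul_nonneg (hy i).le (sub_nonneg.2 (c'.le i))] at hsum
  refine Cell.ext <| c.basis.ext fun i => ?_
  have hi := hsum i (Finsupp.mem_support_iff.2 (hy i).ne')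
  rw [basis_apply, toDual_apply]
  exact sub_eq_zero.1 ((mul_eq_zero_iff_left (hy i).ne').1 hi)

theorem exists_pivot [Finite ι] (hw : IsGenericWeight v w) (c : Cell v w) {e : c.support} {f : ι}
    (hf : c.basis.coord e (v f) < 0) :
    ∃ c' : Cell v w, ∃ g : 𝕜, 0 < g ∧ c'.toDual = c.toDual - g • c.basis.coord e := by
  set p := c.basis.coord e with hp
  have hsupport : ∀ i : c.support, 0 ≤ p (v i) := fun i => by
    classical
    rw [hp, ← c.basis_apply, Basis.coord_apply, Basis.repr_self, Finsupp.single_apply]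
    split_ifs <;> simp
  obtain ⟨m, hm, hmin⟩ := Set.exists_min_image {i | p (v i) < 0}
    (fun i => (w i - c.toDual (v i)) / -p (v i)) (Set.toFinite _) ⟨f, hf⟩
  simp only [Set.mem_ofPred_eq] at hm hmin
  set g := (w m - c.toDual (v m)) / -p (v m)
  have hgm : g * -p (v m) = w m - c.toDual (v m) := div_mul_cancel₀ _ (neg_pos.2 hm).ne'
  have hm_lt : c.toDual (v m) < w m :=
    (c.le m).lt_of_ne fun h => (hsupport ⟨m, h⟩).not_gt hm
  have hg_pos : 0 < g := div_pos (sub_pos.2 hm_lt) (neg_pos.2 hm)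
  have hle : ∀ i, (c.toDual - g • p) (v i) ≤ w i := fun i => by
    simp only [LinearMap.sub_apply, LinearMap.smul_apply, smul_eq_mul]
    rcases lt_or_ge (p (v i)) 0 with hi | hi
    · have := (le_div_iff₀ (neg_pos.2 hi)).1 (hmin i hi)
      linarith
    · have := mul_nonneg hg_pos.le hi
      linarith [c.le i]
  refine ⟨⟨c.toDual - g • p, hle, hw _, ?_⟩, g, hg_pos, rfl⟩
  refine eq_top_of_coord_ne_zero c.basis (e := e) (x := v m) (fun i hi => ?_) ?_ hm.ne
  · refine Submodule.subset_span ⟨i, ?_, (c.basis_apply i).symm⟩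
    have hpi : p (v i) = 0 := by
      rw [hp, ← c.basis_apply, Basis.coord_apply, Basis.repr_self, Finsupp.single_eq_of_ne hi.symm]
    simp [mem_tightSet, hpi, c.toDual_apply]
  · refine Submodule.subset_span ⟨m, ?_, rfl⟩
    simp only [mem_tightSet, LinearMap.sub_apply, LinearMap.smul_apply, smul_eq_mul]
    linarith

theorem exists_forall_repr_pos [Finite ι] (hw : IsGenericWeight v w) [Nonempty (Cell v w)] {y : V}
    (hy : y ∈ PointedCone.hull 𝕜 (Set.range v))
    (hy₀ : ∀ (c : Cell v w) (i : c.support), c.basis.repr y i ≠ 0) :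
    ∃ c : Cell v w, ∀ i, 0 < c.basis.repr y i := by
  obtain ⟨c, hc⟩ := Finite.exists_max fun c : Cell v w => c.toDual y
  refine ⟨c, fun e => (hy₀ c e).lt_or_gt.resolve_left fun he => ?_⟩
  obtain ⟨f, hf⟩ : ∃ f, c.basis.coord e (v f) < 0 := by
    by_contra! h
    have hle : PointedCone.hull 𝕜 (Set.range v) ≤
        (PointedCone.positive 𝕜 𝕜).comap (c.basis.coord e) :=
      Submodule.span_le.2 (Set.range_subset_iff.2 h)
    exact he.not_ge (hle hy)
  obtain ⟨c', g, hg, hc'⟩ := c.exists_pivot hw hf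
  have hlt : c'.toDual y = c.toDual y - g * c.basis.repr y e := by
    simp [hc']
  linarith [hc c', mul_neg_of_pos_of_neg hg he]

end Cell

variable [IsStrictOrderedRing 𝕜]

theorem exists_eventually_isGenericWeight [Finite ι] (v : ι → V) (w₀ : ι → 𝕜) :
    ∃ z : ι → 𝕜, ∀ᶠ M : 𝕜 in atTop, IsGenericWeight v (M • w₀ + z) := by
  choose r hr hv hr₀ using fun J : {J : Set ι // ¬LinearIndepOn 𝕜 v J} =>
    exists_relation_of_not_linearIndepOn J.2
  let ψ (J : {J : Set ι // ¬LinearIndepOn 𝕜 v J}) : Dual 𝕜 (ι → 𝕜) :=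
    (Finsupp.bilinearCombination 𝕜 𝕜).flip (r J)
  obtain ⟨z, hz⟩ := Dual.exists_forall_ne_zero_of_forall_exists ψ fun J => by
    obtain ⟨i, hi⟩ := Finsupp.ne_iff.1 (hr₀ J)
    classical
    exact ⟨Pi.single i 1, by
      simpa [ψ, Finsupp.linearCombination_apply, Finsupp.sum, Pi.single_apply] using hi⟩
  refine ⟨z, ?_⟩
  filter_upwards [eventually_all.2 fun J => eventually_mul_add_ne_zero (a := ψ J w₀) (.inr (hz J))]
    with M hM
  refine isGenericWeight_of_relations fun J hJ => ⟨r ⟨J, hJ⟩, hr _, hv _, ?_⟩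
  have hψ : ψ ⟨J, hJ⟩ (M • w₀ + z) ≠ 0 := by
    rw [map_add, map_smul]
    exact hM _
  exact hψ

theorem exists_isGenericWeight_support_superset [Finite ι]
    (hv : Submodule.span 𝕜 (Set.range v) = ⊤) {I : Set ι} (hI : LinearIndepOn 𝕜 v I) :
    ∃ w : ι → 𝕜, IsGenericWeight v w ∧ ∃ c : Cell v w, I ⊆ c.support := by
  obtain ⟨B, -, hIB, hspan, hB⟩ := exists_linearIndepOn_extension hI (Set.subset_univ I)
  rw [Set.image_univ, ← Submodule.span_le, hv, top_le_iff] at hspan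
  obtain ⟨z, hz⟩ := exists_eventually_isGenericWeight v (Set.indicator Bᶜ (1 : ι → 𝕜))
  let b : Basis B 𝕜 V := .mk hB (by rw [← Set.image_eq_range, hspan])
  let l : Dual 𝕜 V := b.constr 𝕜 fun i => z i
  have hl : ∀ i ∈ B, l (v i) = z i := fun i hi => by
    rw [← b.constr_basis 𝕜 (fun i => z i) ⟨i, hi⟩, show b ⟨i, hi⟩ = v i from Basis.mk_apply ..]
  obtain ⟨M, hw, hM⟩ := (hz.and (eventually_all.2 fun i =>
    eventually_ge_atTop (l (v i) - z i))).exists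
  have htight : B ⊆ tightSet v (M • Set.indicator Bᶜ 1 + z) l := fun i hi => by
    simp [mem_tightSet, hl i hi, hi]
  refine ⟨_, hw, ⟨l, fun i => ?_, hw l, ?_⟩, hIB.trans htight⟩
  · by_cases hi : i ∈ B
    · exact (htight hi).le
    · simpa [hi, sub_le_iff_le_add] using hM i
  · exact top_le_iff.1 (hspan.ge.trans (Submodule.span_mono (Set.image_mono htight)))

end Triangulation

section HilbertSeries

open Module

variable {𝕜 V : Type*} [Field 𝕜] [AddCommGroup V] [Module 𝕜 V] {L : AddSubgroup V}
  {ht : Dual 𝕜 V} {A : Set V}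

theorem apply_eq_sum_repr {κ : Type*} [Fintype κ] {b : Basis κ 𝕜 V} (hht : ∀ i, ht (b i) = 1)
    (x : V) : ht x = ∑ i, b.repr x i :=
  calc ht x = ht (∑ i, b.repr x i • b i) := by rw [b.sum_repr]
    _ = ∑ i, b.repr x i := by simp only [map_sum, map_smul, hht, smul_eq_mul, mul_one]

theorem repr_sum_smul_comp {κ σ : Type*} [Fintype κ] (b : Basis σ 𝕜 V) {e : κ → σ}
    (he : Function.Injective e) (a : κ → 𝕜) (k : κ) :
    b.repr (∑ j, a j • b (e j)) (e k) = a k := by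
  classical
  simp [Finsupp.single_apply, he.eq_iff]

theorem repr_sum_smul_comp_of_notMem_range {κ σ : Type*} [Fintype κ] (b : Basis σ 𝕜 V)
    {e : κ → σ} {i : σ} (hi : i ∉ Set.range e) (a : κ → 𝕜) :
    b.repr (∑ j, a j • b (e j)) i = 0 := by
  classical
  have : ∀ j, e j ≠ i := fun j h => hi ⟨j, h⟩
  simp [this]

/-- The points of `A` which lie in the lattice `L` and have height `t`. -/
def latticeSlice (L : AddSubgroup V) (ht : Dual 𝕜 V) (A : Set V) (t : ℕ) : Set V :=
  {x ∈ A | x ∈ L ∧ ht x = t}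

/-- The generating function counting the lattice points of `A` by their height. It is only
meaningful if all slices are finite, since `Set.ncard` sends infinite sets to `0`. -/
noncomputable def hilbertSeries (L : AddSubgroup V) (ht : Dual 𝕜 V) (A : Set V) : PowerSeries ℤ :=
  .mk fun t => (latticeSlice L ht A t).ncard

theorem coeff_hilbertSeries (t : ℕ) :
    PowerSeries.coeff t (hilbertSeries L ht A) = (latticeSlice L ht A t).ncard :=
  PowerSeries.coeff_mk ..

theorem latticeSlice_mono {B : Set V} (h : A ⊆ B) (t : ℕ) :
    latticeSlice L ht A t ⊆ latticeSlice L ht B t :=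
  fun _ hx => ⟨h hx.1, hx.2⟩

theorem hilbertSeries_iUnion {ι : Type*} [Fintype ι] {A : ι → Set V}
    (hfin : ∀ i t, (latticeSlice L ht (A i) t).Finite) (hA : Pairwise (Function.onFun Disjoint A)) :
    hilbertSeries L ht (⋃ i, A i) = ∑ i, hilbertSeries L ht (A i) := by
  ext t
  have hslice : latticeSlice L ht (⋃ i, A i) t = ⋃ i, latticeSlice L ht (A i) t := by
    ext x
    simp only [latticeSlice, Set.mem_iUnion, Set.mem_ofPred_eq, exists_and_right]
  rw [map_sum, coeff_hilbertSeries, hslice, Set.ncard_iUnion_of_finite fun i => hfin i t,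
    finsum_eq_sum_of_fintype, Nat.cast_sum]
  · simp only [coeff_hilbertSeries]
  · exact hA.mono fun i j h => h.mono (fun _ hx => hx.1) fun _ hx => hx.1

theorem latticeSlice_vadd_succ {v : V} (hv : v ∈ L) (hht : ht v = 1) (t : ℕ) :
    latticeSlice L ht (v +ᵥ A) (t + 1) = v +ᵥ latticeSlice L ht A t := by
  ext x
  simp only [latticeSlice, Set.mem_vadd_set_iff_neg_vadd_mem, vadd_eq_add, Set.mem_ofPred_eq,
    map_add, map_neg, hht, Nat.cast_add, Nat.cast_one, neg_add_eq_iff_eq_add, add_comm (t : 𝕜),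
    L.add_mem_cancel_left (L.neg_mem hv)]

theorem one_sub_X_mul_hilbertSeries [LinearOrder 𝕜] [IsStrictOrderedRing 𝕜] {v : V} (hv : v ∈ L)
    (hht : ht v = 1) (hA : ∀ x ∈ A, 0 ≤ ht x) (hvA : v +ᵥ A ⊆ A)
    (hfin : ∀ t, (latticeSlice L ht A t).Finite) :
    (1 - PowerSeries.X) * hilbertSeries L ht A = hilbertSeries L ht (A \ (v +ᵥ A)) := by
  ext t
  have hdiff : latticeSlice L ht (A \ (v +ᵥ A)) t =
      latticeSlice L ht A t \ latticeSlice L ht (v +ᵥ A) t := by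
    ext x
    simp only [latticeSlice, Set.mem_sdiff, Set.mem_ofPred_eq]
    tauto
  have hsub := latticeSlice_mono (L := L) (ht := ht) hvA t
  rw [sub_mul, one_mul, map_sub, coeff_hilbertSeries, coeff_hilbertSeries, hdiff,
    Set.ncard_sdiff hsub ((hfin t).subset hsub), Nat.cast_sub (Set.ncard_le_ncard hsub (hfin t))]
  congr 1
  cases t with
  | zero =>
    have hempty : latticeSlice L ht (v +ᵥ A) 0 = ∅ := by
      refine Set.eq_empty_of_forall_notMem ?_
      rintro _ ⟨⟨x, hx, rfl⟩, -, h⟩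
      simp only [vadd_eq_add, map_add, hht, Nat.cast_zero] at h
      linarith [hA x hx]
    simp [hempty]
  | succ t =>
    rw [PowerSeries.coeff_succ_X_mul, coeff_hilbertSeries, latticeSlice_vadd_succ hv hht,
      Set.ncard_vadd_set]

end HilbertSeries

section HalfOpen

open Module

variable {𝕜 V κ : Type*} [Field 𝕜] [LinearOrder 𝕜] [AddCommGroup V] [Module 𝕜 V]
  (b : Basis κ 𝕜 V) (q : V)

/-- The half-open simplicial cone of a basis `b`: the points from which a small step in the
direction `q` leads into the interior of the cone, when no coordinate of `q` vanishes. -/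
def halfOpenCone : Set V :=
  {x | ∀ i, 0 < b.repr x i ∨ b.repr x i = 0 ∧ 0 < b.repr q i}

/-- The part of `halfOpenCone b q` which is not in its translates by the vectors `b i`, `i ∈ s`.
For `s` the set of all indices this is the half-open fundamental parallelepiped. -/
def halfOpenBox (s : Finset κ) : Set V :=
  {x ∈ halfOpenCone b q | ∀ i ∈ s, b.repr x i < 1 ∨ b.repr x i = 1 ∧ b.repr q i ≤ 0}

variable {b q} {x : V}

theorem halfOpenBox_subset_halfOpenCone {s : Finset κ} : halfOpenBox b q s ⊆ halfOpenCone b q :=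
  fun _ hx => hx.1

theorem halfOpenBox_empty : halfOpenBox b q ∅ = halfOpenCone b q := by
  simp [halfOpenBox]

theorem repr_nonneg_of_mem_halfOpenCone (hx : x ∈ halfOpenCone b q) (i : κ) :
    0 ≤ b.repr x i := by
  rcases hx i with h | h
  exacts [h.le, h.1.ge]

variable [IsStrictOrderedRing 𝕜]

theorem eventually_forall_repr_pos_iff [Finite κ] (b : Basis κ 𝕜 V) (q x : V) :
    ∀ᶠ M : 𝕜 in Filter.atTop, (∀ i, 0 < b.repr (M • x + q) i) ↔ x ∈ halfOpenCone b q := by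
  filter_upwards [Filter.eventually_all.2 fun i =>
    eventually_pos_mul_add_iff (b.repr x i) (b.repr q i)] with M hM
  simp only [map_add, map_smul, Finsupp.add_apply, Finsupp.smul_apply, smul_eq_mul, hM]
  rfl

theorem vadd_halfOpenBox_subset {s : Finset κ} {i : κ} (hi : i ∉ s) :
    b i +ᵥ halfOpenBox b q s ⊆ halfOpenBox b q s := by
  classical
  rintro _ ⟨x, ⟨hx, hs⟩, rfl⟩
  refine ⟨fun j => ?_, fun j hj => ?_⟩
  · have := hx j
    simp only [vadd_eq_add, map_add, Basis.repr_self, Finsupp.add_apply, Finsupp.single_apply]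
    grind
  · have hij : i ≠ j := fun h => hi (h ▸ hj)
    simpa [Finsupp.single_apply, hij] using hs j hj

theorem halfOpenBox_sdiff_vadd [DecidableEq κ] {s : Finset κ} {i : κ} :
    halfOpenBox b q s \ (b i +ᵥ halfOpenBox b q s) = halfOpenBox b q (insert i s) := by
  ext x
  have hcoord : ∀ j, b.repr (-b i + x) j = b.repr x j - if i = j then 1 else 0 := fun j => by
    simp [Finsupp.single_apply, neg_add_eq_sub]
  simp only [halfOpenBox, halfOpenCone, Set.mem_sdiff, Set.mem_vadd_set_iff_neg_vadd_mem,
    vadd_eq_add, Set.mem_ofPred_eq, hcoord, Finset.forall_mem_insert]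
  constructor
  · rintro ⟨⟨hx, hs⟩, h⟩
    refine ⟨hx, ?_, hs⟩
    contrapose! h
    refine ⟨fun j => ?_, fun j hj => ?_⟩
    · have := hx j
      grind
    · have := hs j hj
      grind
  · rintro ⟨hx, hxi, hs⟩
    refine ⟨⟨hx, hs⟩, fun h => ?_⟩
    have := h.1 i
    grind

theorem exists_add_sum_mem_halfOpenBox [Fintype κ] (hx : ∀ i, b.repr x i ∈ Set.Icc 0 1)
    (hq : ∀ i, b.repr x i = 1 → b.repr q i ≤ 0) :
    ∃ J : Finset κ, x + ∑ i ∈ J, b i ∈ halfOpenBox b q Finset.univ := by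
  classical
  have hcoord : ∀ i, b.repr (x + ∑ j with b.repr x j = 0 ∧ b.repr q j ≤ 0, b j) i =
      b.repr x i + if b.repr x i = 0 ∧ b.repr q i ≤ 0 then 1 else 0 := fun i => by
    simp [Finsupp.single_apply]
  refine ⟨Finset.univ.filter fun i => b.repr x i = 0 ∧ b.repr q i ≤ 0,
    fun i => ?_, fun i _ => ?_⟩ <;>
  · have := Set.mem_Icc.1 (hx i)
    have := hq i
    grind

section Height

variable {L : AddSubgroup V} {ht : Dual 𝕜 V}

theorem one_sub_X_pow_mul_hilbertSeries_halfOpenCone [Finite κ] (hL : ∀ i, b i ∈ L)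
    (hht : ∀ i, ht (b i) = 1) (hfin : ∀ t, (latticeSlice L ht (halfOpenCone b q) t).Finite)
    (s : Finset κ) :
    (1 - PowerSeries.X) ^ s.card * hilbertSeries L ht (halfOpenCone b q) =
      hilbertSeries L ht (halfOpenBox b q s) := by
  classical
  cases nonempty_fintype κ
  induction s using Finset.induction_on with
  | empty => simp [halfOpenBox_empty]
  | insert i s hi ih =>
    rw [Finset.card_insert_of_notMem hi, pow_succ', mul_assoc, ih,
      one_sub_X_mul_hilbertSeries (hL i) (hht i) (fun x hx => ?_) (vadd_halfOpenBox_subset hi)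
        fun t => (hfin t).subset (latticeSlice_mono halfOpenBox_subset_halfOpenCone t),
      halfOpenBox_sdiff_vadd]
    rw [apply_eq_sum_repr hht]
    exact Finset.sum_nonneg fun j _ => repr_nonneg_of_mem_halfOpenCone hx.1 j

theorem le_card_of_mem_latticeSlice_halfOpenBox [Fintype κ] (hht : ∀ i, ht (b i) = 1) {t : ℕ}
    (hx : x ∈ latticeSlice L ht (halfOpenBox b q Finset.univ) t) : t ≤ Fintype.card κ := by
  have hle : ∀ i, b.repr x i ≤ 1 := fun i =>
    (hx.1.2 i (Finset.mem_univ i)).elim le_of_lt fun h => h.1.le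
  have hsum : ∑ i, b.repr x i ≤ Fintype.card κ := by
    simpa using Finset.sum_le_sum fun i (_ : i ∈ Finset.univ) => hle i
  rw [← apply_eq_sum_repr hht, hx.2.2] at hsum
  exact_mod_cast hsum

theorem exists_latticeSlice_halfOpenBox_nonempty [Fintype κ] (hL : ∀ i, b i ∈ L)
    (hht : ∀ i, ht (b i) = 1) (hx : ∀ i, b.repr x i ∈ Set.Icc 0 1)
    (hq : ∀ i, b.repr x i = 1 → b.repr q i ≤ 0) {s : ℕ}
    (hxL : x ∈ latticeSlice L ht Set.univ s) :
    ∃ t ≥ s, (latticeSlice L ht (halfOpenBox b q Finset.univ) t).Nonempty := by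
  obtain ⟨J, hJ⟩ := exists_add_sum_mem_halfOpenBox hx hq
  refine ⟨s + J.card, Nat.le_add_right .., _, hJ,
    L.add_mem hxL.2.1 (L.sum_mem fun i _ => hL i), ?_⟩
  simp [hht, hxL.2.2]

theorem exists_latticeSlice_halfOpenBox_nonempty_of_comp [Fintype κ] (hL : ∀ i, b i ∈ L)
    (hht : ∀ i, ht (b i) = 1) {ι : Type*} [Fintype ι] {e : ι → κ} (he : Function.Injective e)
    {a : ι → 𝕜} (ha : ∀ j, a j ∈ Set.Icc 0 1) (hq : ∀ j, a j = 1 → b.repr q (e j) ≤ 0)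
    (haL : ∑ j, a j • b (e j) ∈ L) {s : ℕ} (hs : ∑ j, a j = s) :
    ∃ t ≥ s, (latticeSlice L ht (halfOpenBox b q Finset.univ) t).Nonempty := by
  have hin := repr_sum_smul_comp b he a
  have hout := fun i hi => repr_sum_smul_comp_of_notMem_range b (e := e) (i := i) hi a
  refine exists_latticeSlice_halfOpenBox_nonempty hL hht (fun i => ?_) (fun i hi => ?_)
    ⟨Set.mem_univ _, haL, by simp [hht, hs]⟩
  · by_cases h : i ∈ Set.range e
    · obtain ⟨j, rfl⟩ := h
      exact (hin j).symm ▸ ha j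
    · exact (hout i h).symm ▸ Set.left_mem_Icc.2 zero_le_one
  · by_cases h : i ∈ Set.range e
    · obtain ⟨j, rfl⟩ := h
      exact hq j (hin j ▸ hi)
    · exact absurd (hout i h ▸ hi) zero_ne_one

end Height

end HalfOpen

section HullDecomposition

open Filter Module

variable {𝕜 V ι : Type*} [Field 𝕜] [LinearOrder 𝕜] [IsStrictOrderedRing 𝕜] [AddCommGroup V]
  [Module 𝕜 V] {v : ι → V} {w : ι → 𝕜} {q u : V}

theorem halfOpenCone_subset_hull [Finite ι] (c : Cell v w) :
    halfOpenCone c.basis q ⊆ PointedCone.hull 𝕜 (Set.range v) := by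
  have := Fintype.ofFinite c.support
  intro x hx
  rw [← c.basis.sum_repr x]
  refine sum_mem fun i _ => PointedCone.smul_mem _ (repr_nonneg_of_mem_halfOpenCone hx i) ?_
  exact PointedCone.subset_hull ⟨i, (c.basis_apply i).symm⟩

theorem pairwise_disjoint_halfOpenCone [Finite ι] :
    Pairwise (Function.onFun Disjoint fun c : Cell v w => halfOpenCone c.basis q) := by
  refine fun c c' hne => Set.disjoint_left.2 fun x hx hx' => hne ?_
  obtain ⟨M, hM, hM'⟩ := ((eventually_forall_repr_pos_iff c.basis q x).and
    (eventually_forall_repr_pos_iff c'.basis q x)).exists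
  exact Cell.eq_of_repr_pos (hM.2 hx) (hM'.2 hx')

theorem iUnion_halfOpenCone [Finite ι] (hw : IsGenericWeight v w) [Nonempty (Cell v w)]
    (hq : q ∈ PointedCone.hull 𝕜 (Set.range v))
    (hq₀ : ∀ (c : Cell v w) (i : c.support), c.basis.repr q i ≠ 0) :
    ⋃ c : Cell v w, halfOpenCone c.basis q = PointedCone.hull 𝕜 (Set.range v) := by
  refine (Set.iUnion_subset halfOpenCone_subset_hull).antisymm fun x hx => ?_
  obtain ⟨M, hpos, hne, hM⟩ := ((eventually_all.2 fun c : Cell v w =>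
    eventually_forall_repr_pos_iff c.basis q x).and ((eventually_all.2 fun c : Cell v w =>
    eventually_all.2 fun i => eventually_mul_add_ne_zero (a := c.basis.repr x i)
      (.inr (hq₀ c i))).and (eventually_ge_atTop 0))).exists
  obtain ⟨c, hc⟩ := Cell.exists_forall_repr_pos hw (add_mem (PointedCone.smul_mem _ hM hx) hq)
    fun c i => by simpa using hne c i
  exact Set.mem_iUnion.2 ⟨c, (hpos c).1 hc⟩

theorem exists_mem_hull_forall_ne_zero {σ : Type*} [Finite σ] [Finite ι]
    (hv : Submodule.span 𝕜 (Set.range v) = ⊤) {f : σ → Dual 𝕜 V} (hf : ∀ j, f j ≠ 0) :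
    ∃ z ∈ PointedCone.hull 𝕜 (Set.range v), ∀ j, f j z ≠ 0 := by
  have := Fintype.ofFinite ι
  obtain ⟨z, hz⟩ := Dual.exists_forall_ne_zero_of_forall_exists f fun j => by
    simpa [LinearMap.ext_iff] using hf j
  obtain ⟨a, rfl⟩ := (Submodule.mem_span_range_iff_exists_fun 𝕜).1
    (show z ∈ Submodule.span 𝕜 (Set.range v) by simp [hv])
  obtain ⟨M, hne, hM⟩ := ((eventually_all.2 fun j =>
    eventually_mul_add_ne_zero (a := f j (∑ i, v i)) (.inr (hz j))).and
    (eventually_all.2 fun i => eventually_ge_atTop (-a i))).exists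
  refine ⟨M • ∑ i, v i + ∑ i, a i • v i, ?_, fun j => ?_⟩
  · rw [Finset.smul_sum, ← Finset.sum_add_distrib]
    refine sum_mem fun i _ => ?_
    rw [← add_smul]
    exact PointedCone.smul_mem _ (neg_le_iff_add_nonneg.1 (hM i))
      (PointedCone.subset_hull ⟨i, rfl⟩)
  · rw [map_add, map_smul]
    exact hne j

theorem exists_generic_direction [Finite ι] (hv : Submodule.span 𝕜 (Set.range v) = ⊤)
    (hu : u ∈ PointedCone.hull 𝕜 (Set.range v)) :
    ∃ q ∈ PointedCone.hull 𝕜 (Set.range v), ∀ (c : Cell v w) (i : c.support),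
      c.basis.repr q i ≠ 0 ∧ (c.basis.repr u i < 0 → c.basis.repr q i ≤ 0) := by
  obtain ⟨z, hz, hz₀⟩ := exists_mem_hull_forall_ne_zero hv
    (f := fun p : Σ c : Cell v w, c.support => p.1.basis.coord p.2)
    fun p h => one_ne_zero (α := 𝕜) <| by simpa using DFunLike.congr_fun h (p.1.basis p.2)
  obtain ⟨M, h, hM⟩ := ((eventually_all.2 fun p : Σ c : Cell v w, c.support =>
    (eventually_mul_add_ne_zero (a := p.1.basis.coord p.2 u) (.inr (hz₀ p))).and
      (eventually_pos_mul_add_iff (p.1.basis.coord p.2 u) (p.1.basis.coord p.2 z))).and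
    (eventually_ge_atTop 0)).exists
  refine ⟨M • u + z, add_mem (PointedCone.smul_mem _ hM hu) hz, fun c i => ?_⟩
  have hi := h ⟨c, i⟩
  simp only [Basis.coord_apply] at hi
  rw [map_add, map_smul, Finsupp.add_apply, Finsupp.smul_apply, smul_eq_mul]
  refine ⟨hi.1, fun hneg => not_lt.1 fun hpos => ?_⟩
  rcases hi.2.1 hpos with h | h
  exacts [hneg.not_gt h, hneg.ne h.1]

variable {L : AddSubgroup V} {ht : Dual 𝕜 V}

theorem one_sub_X_pow_mul_hilbertSeries_hull [Finite ι] (hw : IsGenericWeight v w)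
    [Fintype (Cell v w)] [Nonempty (Cell v w)] [∀ c : Cell v w, Fintype c.support]
    (hq : q ∈ PointedCone.hull 𝕜 (Set.range v))
    (hq₀ : ∀ (c : Cell v w) (i : c.support), c.basis.repr q i ≠ 0)
    (hL : ∀ i, v i ∈ L) (hht : ∀ i, ht (v i) = 1)
    (hfin : ∀ t, (latticeSlice L ht (PointedCone.hull 𝕜 (Set.range v) : Set V) t).Finite) :
    (1 - PowerSeries.X) ^ finrank 𝕜 V *
        hilbertSeries L ht (PointedCone.hull 𝕜 (Set.range v) : Set V) =
      ∑ c : Cell v w, hilbertSeries L ht (halfOpenBox c.basis q Finset.univ) := by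
  have hfin' : ∀ (c : Cell v w) t, (latticeSlice L ht (halfOpenCone c.basis q) t).Finite :=
    fun c t => (hfin t).subset (latticeSlice_mono (halfOpenCone_subset_hull c) t)
  rw [← iUnion_halfOpenCone hw hq hq₀, hilbertSeries_iUnion hfin' pairwise_disjoint_halfOpenCone,
    Finset.mul_sum]
  refine Finset.sum_congr rfl fun c _ => ?_
  rw [finrank_eq_card_basis c.basis, ← Finset.card_univ]
  exact one_sub_X_pow_mul_hilbertSeries_halfOpenCone (fun i => c.basis_apply i ▸ hL i)
    (fun i => c.basis_apply i ▸ hht i) (hfin' c) _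

theorem coeff_one_sub_X_pow_mul_hilbertSeries_hull_eq_zero [Finite ι]
    (hv : Submodule.span 𝕜 (Set.range v) = ⊤) (hL : ∀ i, v i ∈ L) (hht : ∀ i, ht (v i) = 1)
    (hfin : ∀ t, (latticeSlice L ht (PointedCone.hull 𝕜 (Set.range v) : Set V) t).Finite) {t : ℕ}
    (hlt : finrank 𝕜 V < t) :
    PowerSeries.coeff t ((1 - PowerSeries.X) ^ finrank 𝕜 V *
      hilbertSeries L ht (PointedCone.hull 𝕜 (Set.range v) : Set V)) = 0 := by
  obtain ⟨w, hw, c₀, -⟩ := exists_isGenericWeight_support_superset hv (linearIndepOn_empty 𝕜 v)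
  have : Nonempty (Cell v w) := ⟨c₀⟩
  have := Fintype.ofFinite (Cell v w)
  have := fun c : Cell v w => Fintype.ofFinite c.support
  obtain ⟨q, hq, hq₀⟩ := exists_generic_direction (w := w) hv (zero_mem _)
  rw [one_sub_X_pow_mul_hilbertSeries_hull hw hq (fun c i => (hq₀ c i).1) hL hht hfin, map_sum]
  refine Finset.sum_eq_zero fun c _ => ?_
  have hempty : latticeSlice L ht (halfOpenBox c.basis q Finset.univ) t = ∅ := by
    refine Set.eq_empty_of_forall_notMem fun x hx => hlt.not_ge ?_
    rw [finrank_eq_card_basis c.basis]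
    exact le_card_of_mem_latticeSlice_halfOpenBox (fun i => c.basis_apply i ▸ hht i) hx
  rw [coeff_hilbertSeries, hempty, Set.ncard_empty, Nat.cast_zero]

theorem exists_coeff_one_sub_X_pow_mul_hilbertSeries_hull_ne_zero [Finite ι]
    (hv : Submodule.span 𝕜 (Set.range v) = ⊤) (hL : ∀ i, v i ∈ L) (hht : ∀ i, ht (v i) = 1)
    (hfin : ∀ t, (latticeSlice L ht (PointedCone.hull 𝕜 (Set.range v) : Set V) t).Finite)
    {κ : Type*} [Fintype κ] {e : κ → ι} (he : LinearIndependent 𝕜 (v ∘ e)) {a d : κ → 𝕜}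
    (ha : ∀ k, a k ∈ Set.Icc 0 1) (hd : ∀ k, a k = 1 → d k < 0)
    (haL : ∑ k, a k • v (e k) ∈ L)
    (hdv : ∑ k, d k • v (e k) ∈ PointedCone.hull 𝕜 (Set.range v)) {s : ℕ} (hs : ∑ k, a k = s) :
    ∃ t ≥ s, PowerSeries.coeff t ((1 - PowerSeries.X) ^ finrank 𝕜 V *
      hilbertSeries L ht (PointedCone.hull 𝕜 (Set.range v) : Set V)) ≠ 0 := by
  have he_inj : Function.Injective e := .of_comp he.injective
  obtain ⟨w, hw, c₀, hc₀⟩ := exists_isGenericWeight_support_superset hv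
    ((linearIndepOn_range_iff he_inj v).2 he)
  have : Nonempty (Cell v w) := ⟨c₀⟩
  have := Fintype.ofFinite (Cell v w)
  have := fun c : Cell v w => Fintype.ofFinite c.support
  obtain ⟨q, hq, hq₀⟩ := exists_generic_direction (w := w) hv hdv
  let e' (k : κ) : c₀.support := ⟨e k, hc₀ ⟨k, rfl⟩⟩
  have he' : Function.Injective e' := fun j k h => he_inj (congrArg Subtype.val h)
  have hsum : ∀ a : κ → 𝕜, ∑ k, a k • v (e k) = ∑ k, a k • c₀.basis (e' k) := fun a => by
    simp only [c₀.basis_apply, e']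
  have hd' : ∀ k, a k = 1 → c₀.basis.repr q (e' k) ≤ 0 := fun k hk =>
    (hq₀ c₀ (e' k)).2 <| by
      rw [hsum, repr_sum_smul_comp c₀.basis he']
      exact hd k hk
  obtain ⟨t, hst, hne⟩ := exists_latticeSlice_halfOpenBox_nonempty_of_comp
    (fun i => c₀.basis_apply i ▸ hL i) (fun i => c₀.basis_apply i ▸ hht i) he' ha hd'
    (hsum a ▸ haL) hs
  refine ⟨t, hst, ne_of_gt ?_⟩
  rw [one_sub_X_pow_mul_hilbertSeries_hull hw hq (fun c i => (hq₀ c i).1) hL hht hfin, map_sum]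
  simp only [coeff_hilbertSeries]
  refine Finset.sum_pos' (fun c _ => Nat.cast_nonneg _) ⟨c₀, Finset.mem_univ c₀, ?_⟩
  rw [Nat.cast_pos, Set.ncard_pos ((hfin t).subset (latticeSlice_mono
    (halfOpenBox_subset_halfOpenCone.trans (halfOpenCone_subset_hull c₀)) t))]
  exact hne

end HullDecomposition

section Cone

open Module

variable {𝕜 E : Type*} [Field 𝕜] [AddCommGroup E] [Module 𝕜 E] {A : Set E} {φ : Dual 𝕜 E}

theorem finrank_vectorSpan_add_one [FiniteDimensional 𝕜 E] (hA : A.Nonempty)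
    (hφ : ∀ x ∈ A, φ x = 1) :
    finrank 𝕜 (vectorSpan 𝕜 A) + 1 = finrank 𝕜 (Submodule.span 𝕜 A) := by
  obtain ⟨a, ha⟩ := hA
  have hker : vectorSpan 𝕜 A ≤ φ.ker := by
    refine Submodule.span_le.2 ?_
    rintro _ ⟨x, hx, y, hy, rfl⟩
    simp [hφ x hx, hφ y hy]
  have hdisj : vectorSpan 𝕜 A ⊓ Submodule.span 𝕜 {a} = ⊥ := by
    refine eq_bot_iff.2 fun x ⟨hx, hx'⟩ => ?_
    obtain ⟨c, rfl⟩ := Submodule.mem_span_singleton.1 hx'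
    have hc : φ (c • a) = 0 := hker hx
    rw [map_smul, hφ a ha, smul_eq_mul, mul_one] at hc
    simp [hc]
  have hsup : vectorSpan 𝕜 A ⊔ Submodule.span 𝕜 {a} = Submodule.span 𝕜 A := by
    refine le_antisymm (sup_le (Submodule.span_le.2 ?_) (Submodule.span_mono (by simpa))) ?_
    · rintro _ ⟨x, hx, y, hy, rfl⟩
      exact sub_mem (Submodule.subset_span hx) (Submodule.subset_span hy)
    · refine Submodule.span_le.2 fun x hx => ?_
      rw [← sub_add_cancel x a]
      exact Submodule.add_mem_sup (vsub_mem_vectorSpan 𝕜 hx ha)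
        (Submodule.mem_span_singleton_self a)
  have ha₀ : a ≠ 0 := by
    rintro rfl
    simpa using hφ 0 ha
  rw [← hsup, ← finrank_span_singleton (K := 𝕜) ha₀, ← Submodule.finrank_sup_add_finrank_inf_eq,
    hdisj, finrank_bot, add_zero]

variable (𝕜) in
/-- The points of `A` as vectors of the linear span of `A`. -/
def toSpan (A : Set E) (a : A) : Submodule.span 𝕜 A :=
  ⟨a, Submodule.subset_span a.2⟩

theorem span_range_toSpan : Submodule.span 𝕜 (Set.range (toSpan 𝕜 A)) = ⊤ := by
  have hrange : Set.range (toSpan 𝕜 A) = (↑) ⁻¹' A := by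
    ext x
    simp [toSpan, Subtype.ext_iff]
  rw [hrange, Submodule.span_span_coe_preimage]

variable [LinearOrder 𝕜] [IsStrictOrderedRing 𝕜]

theorem mem_hull_range_toSpan {x : Submodule.span 𝕜 A} :
    x ∈ PointedCone.hull 𝕜 (Set.range (toSpan 𝕜 A)) ↔ (x : E) ∈ PointedCone.hull 𝕜 A := by
  have hmap : (PointedCone.hull 𝕜 (Set.range (toSpan 𝕜 A))).map (Submodule.span 𝕜 A).subtype =
      PointedCone.hull 𝕜 A := by
    rw [PointedCone.map, PointedCone.hull, Submodule.map_span, ← Set.range_comp]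
    exact congrArg _ Subtype.range_val
  rw [← hmap, PointedCone.mem_map]
  simp

theorem mem_smul_convexHull_of_mem_hull (hA : A.Nonempty) (hφ : ∀ x ∈ A, φ x = 1) {x : E}
    (hx : x ∈ PointedCone.hull 𝕜 A) : 0 ≤ φ x ∧ x ∈ φ x • convexHull 𝕜 A := by
  induction hx using Submodule.span_induction with
  | mem x hx => simpa [hφ x hx] using subset_convexHull 𝕜 A hx
  | zero => simp [Set.zero_smul_set hA.convexHull]
  | add x y _ _ hx hy =>
    rw [map_add, (convex_convexHull 𝕜 A).add_smul hx.1 hy.1]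
    exact ⟨add_nonneg hx.1 hy.1, Set.add_mem_add hx.2 hy.2⟩
  | smul r x _ hx =>
    have hr : φ (r • x) = (r : 𝕜) * φ x := map_smul φ (r : 𝕜) x
    rw [hr, mul_smul]
    exact ⟨mul_nonneg r.2 hx.1, Set.smul_mem_smul_set hx.2⟩

theorem mem_smul_convexHull_iff (hA : A.Nonempty) (hφ : ∀ x ∈ A, φ x = 1) {t : 𝕜} (ht : 0 ≤ t)
    {x : E} : x ∈ t • convexHull 𝕜 A ↔ x ∈ PointedCone.hull 𝕜 A ∧ φ x = t := by
  refine ⟨?_, fun ⟨hx, hxt⟩ => hxt ▸ (mem_smul_convexHull_of_mem_hull hA hφ hx).2⟩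
  rintro ⟨y, hy, rfl⟩
  have hy₁ : φ y = 1 := convexHull_min hφ (convex_hyperplane φ.isLinear 1) hy
  refine ⟨PointedCone.smul_mem _ ht ?_, by simp [hy₁]⟩
  exact convexHull_min PointedCone.subset_hull (PointedCone.convex _) hy

end Cone

section LatticePolytope

open Module

variable {N : ℕ} {A : Set (Fin N → ℝ)} {φ : Dual ℝ (Fin N → ℝ)}

/-- The lattice `ℤ ^ N` in `ℝ ^ N`. -/
def integerLattice (N : ℕ) : AddSubgroup (Fin N → ℝ) :=
  ((Int.castAddHom ℝ).compLeft (Fin N)).range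

/-- The integer points of the linear span of `A`. -/
def spanLattice (A : Set (Fin N → ℝ)) : AddSubgroup (Submodule.span ℝ A) :=
  (integerLattice N).comap (Submodule.span ℝ A).subtype.toAddMonoidHom

theorem ehr_eq_ncard {P : Set (Fin N → ℝ)} (hP : P.Nonempty) (t : ℕ) :
    ehr P t = {x : Fin N → ℤ | (fun i => (x i : ℝ)) ∈ (t : ℝ) • P}.ncard := by
  rw [ehr]
  split_ifs with ht
  · subst ht
    symm
    refine Set.ncard_eq_one.2 ⟨0, ?_⟩
    ext x
    simp [Set.zero_smul_set hP, funext_iff]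
  · rfl

theorem finite_setOf_intCast_mem {K : Set (Fin N → ℝ)} (hK : Bornology.IsBounded K) :
    {x : Fin N → ℤ | (fun i => (x i : ℝ)) ∈ K}.Finite := by
  have hcast : Isometry fun (x : Fin N → ℤ) i => (x i : ℝ) :=
    Isometry.piMap _ fun _ => .of_dist_eq Int.dist_cast_real
  exact (Metric.isCompact_of_isClosed_isBounded (isClosed_discrete _)
    (hcast.antilipschitz.isBounded_preimage hK)).finite_of_discrete

theorem coeff_one_sub_X_pow (n k : ℕ) :
    PowerSeries.coeff k ((1 - PowerSeries.X : PowerSeries ℤ) ^ n) = (-1) ^ k * n.choose k := by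
  have hneg : (1 - PowerSeries.X : PowerSeries ℤ) ^ n =
      PowerSeries.evalNegHom (((1 + Polynomial.X) ^ n : Polynomial ℤ) : PowerSeries ℤ) := by
    simp [sub_eq_add_neg]
  rw [hneg, PowerSeries.evalNegHom, PowerSeries.coeff_rescale, Polynomial.coeff_coe,
    Polynomial.coeff_one_add_X_pow]

theorem deltaCoeff_eq_coeff (P : Set (Fin N → ℝ)) (i : ℕ) :
    deltaCoeff P i = PowerSeries.coeff i
      ((1 - PowerSeries.X) ^ (polyDim P + 1) * PowerSeries.mk fun t => (ehr P t : ℤ)) := by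
  simp only [PowerSeries.coeff_mul, Finset.Nat.sum_antidiagonal_eq_sum_range_succ_mk,
    coeff_one_sub_X_pow, PowerSeries.coeff_mk, deltaCoeff]

theorem image_latticeSlice_hull (hA : A.Nonempty) (hφ : ∀ x ∈ A, φ x = 1) (t : ℕ) :
    (↑) '' latticeSlice (spanLattice A) (φ.domRestrict (Submodule.span ℝ A))
      (PointedCone.hull ℝ (Set.range (toSpan ℝ A)) : Set (Submodule.span ℝ A)) t =
      (fun (x : Fin N → ℤ) i => (x i : ℝ)) ''
        {x | (fun i => (x i : ℝ)) ∈ (t : ℝ) • convexHull ℝ A} := by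
  ext x
  simp only [mem_smul_convexHull_iff hA hφ t.cast_nonneg, Set.mem_image, latticeSlice,
    SetLike.mem_coe, mem_hull_range_toSpan, Set.mem_ofPred_eq]
  constructor
  · rintro ⟨y, ⟨hy, ⟨z, hz⟩, hyt⟩, rfl⟩
    have hz' : (fun i => (z i : ℝ)) = y := hz
    exact ⟨z, by rw [hz']; exact ⟨hy, hyt⟩, hz'⟩
  · rintro ⟨z, ⟨hz, hzt⟩, rfl⟩
    exact ⟨⟨_, PointedCone.hull_le_span ℝ A hz⟩, ⟨hz, ⟨z, rfl⟩, hzt⟩, rfl⟩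

theorem finite_latticeSlice_hull (hA : A.Nonempty) (hA' : A.Finite) (hφ : ∀ x ∈ A, φ x = 1)
    (t : ℕ) : (latticeSlice (spanLattice A) (φ.domRestrict (Submodule.span ℝ A))
      (PointedCone.hull ℝ (Set.range (toSpan ℝ A)) : Set (Submodule.span ℝ A)) t).Finite := by
  refine .of_finite_image ?_ Subtype.val_injective.injOn
  rw [image_latticeSlice_hull hA hφ]
  exact (finite_setOf_intCast_mem ((isBounded_convexHull.2 hA'.isBounded).smul₀ _)).image _

theorem hilbertSeries_hull_eq_mk_ehr (hA : A.Nonempty) (hφ : ∀ x ∈ A, φ x = 1) :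
    hilbertSeries (spanLattice A) (φ.domRestrict (Submodule.span ℝ A))
      (PointedCone.hull ℝ (Set.range (toSpan ℝ A)) : Set (Submodule.span ℝ A)) =
      PowerSeries.mk fun t => (ehr (convexHull ℝ A) t : ℤ) := by
  have hcast : Function.Injective fun (x : Fin N → ℤ) i => (x i : ℝ) := Int.cast_injective.comp_left
  ext t
  rw [coeff_hilbertSeries, PowerSeries.coeff_mk, ehr_eq_ncard hA.convexHull,
    ← Set.ncard_image_of_injective _ Subtype.val_injective, image_latticeSlice_hull hA hφ,
    Set.ncard_image_of_injective _ hcast]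

theorem deltaCoeff_convexHull (hA : A.Nonempty) (hφ : ∀ x ∈ A, φ x = 1) (i : ℕ) :
    deltaCoeff (convexHull ℝ A) i = PowerSeries.coeff i
      ((1 - PowerSeries.X) ^ finrank ℝ (Submodule.span ℝ A) *
        hilbertSeries (spanLattice A) (φ.domRestrict (Submodule.span ℝ A))
          (PointedCone.hull ℝ (Set.range (toSpan ℝ A)) : Set (Submodule.span ℝ A))) := by
  rw [deltaCoeff_eq_coeff, hilbertSeries_hull_eq_mk_ehr hA hφ, polyDim, affineSpan_convexHull,
    direction_affineSpan, finrank_vectorSpan_add_one hA hφ]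

theorem le_polyDeg_convexHull (hA : A.Finite) (hAL : A ⊆ integerLattice N)
    (hφ : ∀ x ∈ A, φ x = 1) {κ : Type*} [Fintype κ] [Nonempty κ] {e : κ → Fin N → ℝ}
    (heA : ∀ k, e k ∈ A) (he : LinearIndependent ℝ e) {a d : κ → ℝ}
    (ha : ∀ k, a k ∈ Set.Icc 0 1) (hd : ∀ k, a k = 1 → d k < 0)
    (haL : ∑ k, a k • e k ∈ integerLattice N)
    (hdA : ∑ k, d k • e k ∈ PointedCone.hull ℝ A) {s : ℕ} (hs : ∑ k, a k = s) :
    s ≤ polyDeg (convexHull ℝ A) := by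
  have hne : A.Nonempty := ⟨_, heA (Classical.arbitrary κ)⟩
  have : Finite A := hA
  have hL : ∀ x : A, toSpan ℝ A x ∈ spanLattice A := fun x => hAL x.2
  have hht : ∀ x : A, φ.domRestrict (Submodule.span ℝ A) (toSpan ℝ A x) = 1 := fun x => hφ x x.2
  have hfin := finite_latticeSlice_hull hne hA hφ
  have hcoe : ∀ c : κ → ℝ, ((∑ k, c k • toSpan ℝ A ⟨e k, heA k⟩ : Submodule.span ℝ A) :
      Fin N → ℝ) = ∑ k, c k • e k := fun c => by simp [toSpan]
  obtain ⟨t, hst, ht⟩ := exists_coeff_one_sub_X_pow_mul_hilbertSeries_hull_ne_zero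
    span_range_toSpan hL hht hfin (e := fun k => ⟨e k, heA k⟩)
    (.of_comp (Submodule.span ℝ A).subtype he) ha hd
    (AddSubgroup.mem_comap.2 (show Subtype.val _ ∈ integerLattice N from (hcoe a).symm ▸ haL))
    (mem_hull_range_toSpan.2 ((hcoe d).symm ▸ hdA)) hs
  have hbdd : BddAbove {i | deltaCoeff (convexHull ℝ A) i ≠ 0} := by
    refine ⟨finrank ℝ (Submodule.span ℝ A), fun i hi => not_lt.1 fun hlt => hi ?_⟩
    rw [deltaCoeff_convexHull hne hφ]
    exact coeff_one_sub_X_pow_mul_hilbertSeries_hull_eq_zero span_range_toSpan hL hht hfin hlt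
  rw [← deltaCoeff_convexHull hne hφ] at ht
  exact hst.trans (le_csSup hbdd ht)

end LatticePolytope

section EdgePolytope

variable {N : ℕ} {G : SimpleGraph (Fin N)}

theorem rho_mk (a b i : Fin N) : rho s(a, b) i = if i = a ∨ i = b then 1 else 0 := by
  simp [rho]

theorem rho_mk_of_ne {a b : Fin N} (h : a ≠ b) : rho s(a, b) = Pi.single a 1 + Pi.single b 1 := by
  ext i
  rw [rho_mk, Pi.add_apply, Pi.single_apply, Pi.single_apply]
  grind

theorem rho_mem_integerLattice (e : Sym2 (Fin N)) : rho e ∈ integerLattice N :=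
  ⟨fun i => if i ∈ e then 1 else 0, by ext i; simp [rho]⟩

theorem sum_rho {e : Sym2 (Fin N)} (he : ¬e.IsDiag) : ∑ i, rho e i = 2 := by
  induction e with | h a b =>
  simp [rho_mk_of_ne he, Finset.sum_add_distrib, one_add_one_eq_two]

theorem le_polyDeg_edgePolytope {κ : Type*} [Fintype κ] [Nonempty κ] {E : κ → Sym2 (Fin N)}
    (hE : ∀ k, E k ∈ G.edgeSet) (hLI : LinearIndependent ℝ (rho ∘ E)) {a d : κ → ℝ}
    (ha : ∀ k, a k ∈ Set.Icc 0 1) (hd : ∀ k, a k = 1 → d k < 0)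
    (haL : ∑ k, a k • rho (E k) ∈ integerLattice N)
    (hdE : ∑ k, d k • rho (E k) ∈ PointedCone.hull ℝ (rho '' G.edgeSet)) {s : ℕ}
    (hs : ∑ k, a k = s) : s ≤ polyDeg (edgePolytope G) := by
  refine le_polyDeg_convexHull (φ := (1 / 2 : ℝ) • ∑ i, LinearMap.proj i) (Set.toFinite _)
    (Set.image_subset_iff.2 fun e _ => rho_mem_integerLattice e) ?_
    (fun k => Set.mem_image_of_mem rho (hE k)) hLI ha hd haL hdE hs
  rintro _ ⟨e, he, rfl⟩
  simp [sum_rho (G.not_isDiag_of_mem_edgeSet he)]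

theorem three_le_polyDeg_of_disjoint_triangles {v : Fin 6 → Fin N} (hv : Function.Injective v)
    (h01 : G.Adj (v 0) (v 1)) (h02 : G.Adj (v 0) (v 2)) (h12 : G.Adj (v 1) (v 2))
    (h34 : G.Adj (v 3) (v 4)) (h35 : G.Adj (v 3) (v 5)) (h45 : G.Adj (v 4) (v 5)) :
    3 ≤ polyDeg (edgePolytope G) := by
  let E : Fin 6 → Sym2 (Fin N) :=
    ![s(v 0, v 1), s(v 0, v 2), s(v 1, v 2), s(v 3, v 4), s(v 3, v 5), s(v 4, v 5)]
  refine le_polyDeg_edgePolytope (E := E) (a := fun _ => 1 / 2) (d := 0) (fun k => ?_) ?_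
    (fun _ => by norm_num) (fun _ => by norm_num) ?_ (by simp) (by norm_num)
  · fin_cases k <;> assumption
  · refine Fintype.linearIndependent_iff.2 fun g hg => ?_
    have hvertex := fun j => congrFun hg (v j)
    simp only [Fin.sum_univ_six] at hvertex
    have h0 : g 0 + g 1 = 0 := by simpa [E, rho_mk, hv.eq_iff] using hvertex 0
    have h1 : g 0 + g 2 = 0 := by simpa [E, rho_mk, hv.eq_iff] using hvertex 1
    have h2 : g 1 + g 2 = 0 := by simpa [E, rho_mk, hv.eq_iff] using hvertex 2
    have h3 : g 3 + g 4 = 0 := by simpa [E, rho_mk, hv.eq_iff] using hvertex 3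
    have h4 : g 3 + g 5 = 0 := by simpa [E, rho_mk, hv.eq_iff] using hvertex 4
    have h5 : g 4 + g 5 = 0 := by simpa [E, rho_mk, hv.eq_iff] using hvertex 5
    intro k
    fin_cases k <;> simp <;> linarith
  · have hsum : ∑ k, (1 / 2 : ℝ) • rho (E k) =
        rho s(v 0, v 1) + rho s(v 2, v 3) + rho s(v 4, v 5) := by
      simp only [E, Fin.sum_univ_six, Matrix.cons_val, rho_mk_of_ne, ne_eq, hv.eq_iff,
        Fin.reduceEq, zero_ne_one, not_false_eq_true]
      module
    rw [hsum]
    exact add_mem (add_mem (rho_mem_integerLattice _) (rho_mem_integerLattice _))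
      (rho_mem_integerLattice _)

theorem three_le_polyDeg_of_common_vertex_triangles {v : Fin 7 → Fin N}
    (hv : Function.Injective v) (hv₀ : ∀ j ≠ 0, G.Adj (v 0) (v j)) (h12 : G.Adj (v 1) (v 2))
    (h34 : G.Adj (v 3) (v 4)) (h56 : G.Adj (v 5) (v 6)) : 3 ≤ polyDeg (edgePolytope G) := by
  let E : Fin 7 → Sym2 (Fin N) := ![s(v 1, v 2), s(v 3, v 4), s(v 5, v 6), s(v 0, v 2),
    s(v 0, v 4), s(v 0, v 5), s(v 0, v 6)]
  -- The box point `∑ a • rho E` is `rho s(v 5, v 6) + rho s(v 0, v 2) + rho s(v 0, v 4)`; it lies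
  -- in the half-open box because the cone vector `rho s(v 0, v 1) + rho s(v 0, v 3) = ∑ d • rho E`
  -- has negative coordinates wherever `a` is `1`.
  let a : Fin 7 → ℝ := ![0, 0, 1, 1, 1, 0, 0]
  let d : Fin 7 → ℝ := ![1, 1, -2, -1, -1, 2, 2]
  refine le_polyDeg_edgePolytope (E := E) (a := a) (d := d)
    (fun k => ?_) ?_ (fun k => ?_) (fun k => ?_) ?_ ?_ ?_
  · fin_cases k
    exacts [h12, h34, h56, hv₀ _ (by decide), hv₀ _ (by decide), hv₀ _ (by decide),
      hv₀ _ (by decide)]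
  · refine Fintype.linearIndependent_iff.2 fun g hg => ?_
    have hvertex := fun j => congrFun hg (v j)
    simp only [Fin.sum_univ_seven] at hvertex
    have h0 : g 3 + g 4 + g 5 + g 6 = 0 := by simpa [E, rho_mk, hv.eq_iff] using hvertex 0
    have h1 : g 0 = 0 := by simpa [E, rho_mk, hv.eq_iff] using hvertex 1
    have h2 : g 0 + g 3 = 0 := by simpa [E, rho_mk, hv.eq_iff] using hvertex 2
    have h3 : g 1 = 0 := by simpa [E, rho_mk, hv.eq_iff] using hvertex 3
    have h4 : g 1 + g 4 = 0 := by simpa [E, rho_mk, hv.eq_iff] using hvertex 4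
    have h5 : g 2 + g 5 = 0 := by simpa [E, rho_mk, hv.eq_iff] using hvertex 5
    have h6 : g 2 + g 6 = 0 := by simpa [E, rho_mk, hv.eq_iff] using hvertex 6
    intro k
    fin_cases k <;> simp <;> linarith
  · fin_cases k <;> norm_num [a]
  · fin_cases k <;> norm_num [a, d]
  · simpa [E, a, Fin.sum_univ_seven] using add_mem (add_mem (rho_mem_integerLattice s(v 5, v 6))
      (rho_mem_integerLattice s(v 0, v 2))) (rho_mem_integerLattice s(v 0, v 4))
  · have hsum : ∑ k, d k • rho (E k) = rho s(v 0, v 1) + rho s(v 0, v 3) := by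
      simp only [E, d, Fin.sum_univ_seven, Matrix.cons_val, rho_mk_of_ne, ne_eq, hv.eq_iff,
        Fin.reduceEq, zero_ne_one, not_false_eq_true]
      module
    rw [hsum]
    exact add_mem (PointedCone.subset_hull ⟨_, hv₀ 1 (by decide), rfl⟩)
      (PointedCone.subset_hull ⟨_, hv₀ 3 (by decide), rfl⟩)
  · norm_num [a, Fin.sum_univ_succ]

end EdgePolytope

section Triangles

variable {V : Type*} {G : SimpleGraph V} {T T' T₁ T₂ T₃ : Finset V}

theorem exists_isCycle_length_four {a b c d : V} (hab : G.Adj a b) (hbc : G.Adj b c)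
    (hcd : G.Adj c d) (hda : G.Adj d a) (hac : a ≠ c) (hbd : b ≠ d) :
    ∃ (v : V) (w : G.Walk v v), w.IsCycle ∧ w.length = 4 := by
  refine ⟨a, .cons hab (.cons hbc (.cons hcd (.cons hda .nil))), ?_, rfl⟩
  have := hab.ne
  have := hbc.ne
  have := hcd.ne
  have := hda.ne
  rw [SimpleGraph.Walk.isCycle_def, SimpleGraph.Walk.isTrail_def]
  simp only [SimpleGraph.Walk.edges_cons, SimpleGraph.Walk.edges_nil,
    SimpleGraph.Walk.support_cons, SimpleGraph.Walk.support_nil, List.tail_cons]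
  grind

theorem exists_eq_of_isNClique_three [DecidableEq V] (hT : G.IsNClique 3 T) {x : V} (hx : x ∈ T) :
    ∃ y z, G.Adj x y ∧ G.Adj x z ∧ G.Adj y z ∧ T = {x, y, z} := by
  obtain ⟨a, b, c, hab, hac, hbc, rfl⟩ := SimpleGraph.is3Clique_iff.1 hT
  simp only [Finset.mem_insert, Finset.mem_singleton] at hx
  rcases hx with rfl | rfl | rfl
  · exact ⟨b, c, hab, hac, hbc, rfl⟩
  · exact ⟨a, c, hab.symm, hbc, hac, by grind⟩
  · exact ⟨a, b, hac.symm, hbc.symm, hab, by grind⟩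

theorem exists_eq_of_isNClique_three_of_ne [DecidableEq V] (hT : G.IsNClique 3 T) {x y : V}
    (hx : x ∈ T) (hy : y ∈ T) (hxy : x ≠ y) :
    ∃ z, G.Adj x z ∧ G.Adj y z ∧ T = {x, y, z} := by
  obtain ⟨a, b, hxa, hxb, hab, rfl⟩ := exists_eq_of_isNClique_three hT hx
  simp only [Finset.mem_insert, Finset.mem_singleton] at hy
  rcases hy with rfl | rfl | rfl
  · exact absurd rfl hxy
  · exact ⟨b, hxb, hab, rfl⟩
  · exact ⟨a, hxa, hab.symm, by grind⟩

theorem eq_of_mem_of_isNClique_three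
    (h4 : ¬∃ (v : V) (w : G.Walk v v), w.IsCycle ∧ w.length = 4) (hT : G.IsNClique 3 T)
    (hT' : G.IsNClique 3 T') (hne : T ≠ T') {x y : V} (hx : x ∈ T) (hx' : x ∈ T') (hy : y ∈ T)
    (hy' : y ∈ T') : x = y := by
  classical
  by_contra hxy
  obtain ⟨z, hxz, hyz, rfl⟩ := exists_eq_of_isNClique_three_of_ne hT hx hy hxy
  obtain ⟨w, hxw, hyw, rfl⟩ := exists_eq_of_isNClique_three_of_ne hT' hx' hy' hxy
  exact h4 (exists_isCycle_length_four hxz hyz.symm hyw hxw.symm hxy fun h => hne (h ▸ rfl))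

theorem exists_mem_of_pairwise_not_disjoint
    (h4 : ¬∃ (v : V) (w : G.Walk v v), w.IsCycle ∧ w.length = 4) (h₁ : G.IsNClique 3 T₁)
    (h₂ : G.IsNClique 3 T₂) (h₃ : G.IsNClique 3 T₃) (hne : T₁ ≠ T₂) (h12 : ¬Disjoint T₁ T₂)
    (h13 : ¬Disjoint T₁ T₃) (h23 : ¬Disjoint T₂ T₃) : ∃ x ∈ T₁, x ∈ T₂ ∧ x ∈ T₃ := by
  classical
  obtain ⟨x, hx₁, hx₂⟩ := Finset.not_disjoint_iff.1 h12
  obtain ⟨y, hy₁, hy₃⟩ := Finset.not_disjoint_iff.1 h13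
  obtain ⟨w, hw₂, hw₃⟩ := Finset.not_disjoint_iff.1 h23
  refine ⟨x, hx₁, hx₂, by_contra fun hx₃ => ?_⟩
  have hxy : x ≠ y := fun h => hx₃ (h ▸ hy₃)
  have hxw : x ≠ w := fun h => hx₃ (h ▸ hw₃)
  have hyw : y ≠ w := fun h =>
    hxy (eq_of_mem_of_isNClique_three h4 h₁ h₂ hne hx₁ hx₂ hy₁ (h ▸ hw₂))
  obtain ⟨c, hyc, hwc, rfl⟩ := exists_eq_of_isNClique_three_of_ne h₃ hy₃ hw₃ hyw
  exact h4 (exists_isCycle_length_four (h₁.isClique hx₁ hy₁ hxy) hyc hwc.symm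
    (h₂.isClique hw₂ hx₂ hxw.symm) (fun h => hx₃ (by simp [h])) hyw)

end Triangles

section EdgePolytopeTriangles

variable {N : ℕ} {G : SimpleGraph (Fin N)} {T T' T₁ T₂ T₃ : Finset (Fin N)}

theorem three_le_polyDeg_of_disjoint (hT : G.IsNClique 3 T) (hT' : G.IsNClique 3 T')
    (hd : Disjoint T T') : 3 ≤ polyDeg (edgePolytope G) := by
  obtain ⟨a, b, c, hab, hac, hbc, rfl⟩ := SimpleGraph.is3Clique_iff.1 hT
  obtain ⟨d, e, f, hde, hdf, hef, rfl⟩ := SimpleGraph.is3Clique_iff.1 hT'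
  refine three_le_polyDeg_of_disjoint_triangles (v := ![a, b, c, d, e, f]) ?_ hab hac hbc hde hdf
    hef
  simp only [Finset.disjoint_insert_left, Finset.disjoint_singleton_left, Finset.mem_insert,
    Finset.mem_singleton, not_or] at hd
  rw [← List.nodup_ofFn]
  simp [List.ofFn_succ, hd, hab.ne, hac.ne, hbc.ne, hde.ne, hdf.ne, hef.ne]

theorem three_le_polyDeg_of_common_vertex {x : Fin N} (h₁ : G.IsNClique 3 T₁)
    (h₂ : G.IsNClique 3 T₂) (h₃ : G.IsNClique 3 T₃) (hx₁ : x ∈ T₁) (hx₂ : x ∈ T₂) (hx₃ : x ∈ T₃)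
    (h12 : ∀ y ∈ T₁, y ∈ T₂ → x = y) (h13 : ∀ y ∈ T₁, y ∈ T₃ → x = y)
    (h23 : ∀ y ∈ T₂, y ∈ T₃ → x = y) : 3 ≤ polyDeg (edgePolytope G) := by
  obtain ⟨a, b, hxa, hxb, hab, rfl⟩ := exists_eq_of_isNClique_three h₁ hx₁
  obtain ⟨c, d, hxc, hxd, hcd, rfl⟩ := exists_eq_of_isNClique_three h₂ hx₂
  obtain ⟨e, f, hxe, hxf, hef, rfl⟩ := exists_eq_of_isNClique_three h₃ hx₃
  simp only [Finset.mem_insert, Finset.mem_singleton, or_imp, forall_and, forall_eq, hxa.ne,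
    hxb.ne, hxc.ne, hxd.ne, imp_false] at h12 h13 h23
  refine three_le_polyDeg_of_common_vertex_triangles (v := ![x, a, b, c, d, e, f]) ?_
    (fun j hj => ?_) hab hcd hef
  · rw [← List.nodup_ofFn]
    simp [List.ofFn_succ, h12, h13, h23, hxa.ne, hxb.ne, hxc.ne, hxd.ne, hxe.ne, hxf.ne, hab.ne,
      hcd.ne, hef.ne]
  · fin_cases j
    exacts [absurd rfl hj, hxa, hxb, hxc, hxd, hxe, hxf]

end EdgePolytopeTriangles

theorem polyDeg_ge_three_of_three_triangles_general
    {N : ℕ} (G : SimpleGraph (Fin N)) (T₁ T₂ T₃ : Finset (Fin N))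
    (h₁ : G.IsNClique 3 T₁) (h₂ : G.IsNClique 3 T₂) (h₃ : G.IsNClique 3 T₃)
    (h12 : T₁ ≠ T₂) (h13 : T₁ ≠ T₃) (h23 : T₂ ≠ T₃)
    (h4 : ¬ ∃ (v : Fin N) (w : G.Walk v v), w.IsCycle ∧ w.length = 4) :
    3 ≤ polyDeg (edgePolytope G) := by
  by_contra hlt
  obtain ⟨x, hx₁, hx₂, hx₃⟩ := exists_mem_of_pairwise_not_disjoint h4 h₁ h₂ h₃ h12
    (mt (three_le_polyDeg_of_disjoint h₁ h₂) hlt) (mt (three_le_polyDeg_of_disjoint h₁ h₃) hlt)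
    (mt (three_le_polyDeg_of_disjoint h₂ h₃) hlt)
  exact hlt <| three_le_polyDeg_of_common_vertex h₁ h₂ h₃ hx₁ hx₂ hx₃
    (fun _ => eq_of_mem_of_isNClique_three h4 h₁ h₂ h12 hx₁ hx₂)
    (fun _ => eq_of_mem_of_isNClique_three h4 h₁ h₃ h13 hx₁ hx₃)
    (fun _ => eq_of_mem_of_isNClique_three h4 h₂ h₃ h23 hx₂ hx₃)

/-- If a finite connected simple graph `G` has at least three
`3`-cycles (three distinct triangles) and no `4`-cycle, then `deg(P_G) ≥ 3`. -/
theorem polyDeg_ge_three_of_three_triangles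
    {N : ℕ} (G : SimpleGraph (Fin N)) (hG : G.Connected)
    (T₁ T₂ T₃ : Finset (Fin N))
    (h₁ : G.IsNClique 3 T₁) (h₂ : G.IsNClique 3 T₂) (h₃ : G.IsNClique 3 T₃)
    (h12 : T₁ ≠ T₂) (h13 : T₁ ≠ T₃) (h23 : T₂ ≠ T₃)
    (h4 : ¬ ∃ (v : Fin N) (w : G.Walk v v), w.IsCycle ∧ w.length = 4) :
    3 ≤ polyDeg (edgePolytope G) :=
  polyDeg_ge_three_of_three_triangles_general G T₁ T₂ T₃ h₁ h₂ h₃ h12 h13 h23 h4
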